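/- Let 𝓐 be a locally finite hyperplane arrangement in ℝ^n, let α : A = C_1 → C_2 → ⋯ → C_t = B be a reduced positive path between chambers A and B, and let C be a chamber adjacent to B. If the positive path from A to C obtained by appending to α the step B → C is not reduced, then there exists a reduced positive path γ from A to C such that the positive path from A to B obtained by appending to γ the step C → B is reduced. -/

import Mathlib

open Set

/-- A subset of `ℝ^n` is an (affine) hyperplane if it is of the form `{x : f x = c}` for a
nonzero linear functional `f` and a real constant `c`. -/
def IsAffineHyperplane {n : ℕ} (H : Set (Fin n → ℝ)) : Prop :=
  ∃ (f : (Fin n → ℝ) →ₗ[ℝ] ℝ) (c : ℝ), f ≠ 0 ∧ H = {x | f x = c}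

/-- A locally finite hyperplane arrangement in `ℝ^n`: a set of affine hyperplanes such that
every point has a neighbourhood meeting only finitely many members. -/
def IsLocallyFiniteArrangement {n : ℕ} (A : Set (Set (Fin n → ℝ))) : Prop :=
  (∀ H ∈ A, IsAffineHyperplane H) ∧
  ∀ x : Fin n → ℝ, ∃ U ∈ nhds x, {H | H ∈ A ∧ (H ∩ U).Nonempty}.Finite

/-- A chamber of the arrangement `A`: a connected component of the complement of the union
of the hyperplanes of `A`. -/
def IsChamber {n : ℕ} (A : Set (Set (Fin n → ℝ))) (C : Set (Fin n → ℝ)) : Prop :=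
  ∃ x ∈ (⋃₀ A)ᶜ, C = connectedComponentIn (⋃₀ A)ᶜ x

/-- A hyperplane `H` separates the chambers `C` and `C'` if they lie in different connected
components of the complement of `H`, i.e. on opposite sides of `H`. -/
def Separates {n : ℕ} (H C C' : Set (Fin n → ℝ)) : Prop :=
  ¬ ∃ x ∈ C, ∃ y ∈ C', connectedComponentIn Hᶜ x = connectedComponentIn Hᶜ y

/-- Two chambers of `A` are adjacent if exactly one hyperplane of `A` separates them. -/
def Adjacent {n : ℕ} (A : Set (Set (Fin n → ℝ))) (C C' : Set (Fin n → ℝ)) : Prop :=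
  IsChamber A C ∧ IsChamber A C' ∧ ∃! H, H ∈ A ∧ Separates H C C'

/-- `C 0, C 1, …, C t` is a positive path of chambers of `A` (with `t` steps): each `C j` is a
chamber and consecutive chambers are adjacent. -/
def IsPositivePath {n : ℕ} (A : Set (Set (Fin n → ℝ))) (t : ℕ) (C : ℕ → Set (Fin n → ℝ)) :
    Prop :=
  (∀ j, j ≤ t → IsChamber A (C j)) ∧ ∀ j, j < t → Adjacent A (C j) (C (j + 1))

/-- A positive path is reduced if no hyperplane of `A` is crossed at two distinct steps. -/
def IsReducedPath {n : ℕ} (A : Set (Set (Fin n → ℝ))) (t : ℕ) (C : ℕ → Set (Fin n → ℝ)) :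
    Prop :=
  IsPositivePath A t C ∧
  ∀ j k, j < t → k < t → j ≠ k →
    ∀ G ∈ A, Separates G (C j) (C (j + 1)) → ¬ Separates G (C k) (C (k + 1))

theorem aux_sep_iff {n : ℕ} {H C C' : Set (Fin n → ℝ)} {f : (Fin n → ℝ) →ₗ[ℝ] ℝ} {c : ℝ}
    (hH : H = {x | f x = c}) (hC : IsPreconnected C) (hC' : IsPreconnected C')
    (h1 : C ⊆ Hᶜ) (h2 : C' ⊆ Hᶜ) {x y : Fin n → ℝ} (hx : x ∈ C) (hy : y ∈ C') :
    Separates H C C' ↔ (f x - c) * (f y - c) < 0 := by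
  have hcont : Continuous f := f.continuous_of_finiteDimensional
  have key : ∀ D : Set (Fin n → ℝ), IsPreconnected D → D ⊆ Hᶜ → ∀ a ∈ D, ∀ b ∈ D,
      0 < (f a - c) * (f b - c) := by
    intro D hD hDH a ha b hb
    by_contra hneg
    push Not at hneg
    have hi := hD.image f hcont.continuousOn
    have hoc := hi.ordConnected
    have : c ∈ f '' D := by
      rcases le_total (f a) c with h | h
      · rcases le_total c (f b) with h' | h'
        · exact hoc.out (mem_image_of_mem _ ha) (mem_image_of_mem _ hb) ⟨h, h'⟩
        · rcases mul_eq_zero.1 (le_antisymm hneg (mul_nonneg_of_nonpos_of_nonpos (by linarith) (by linarith))) with h0 | h0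
          · exact ⟨a, ha, by linarith⟩
          · exact ⟨b, hb, by linarith⟩
      · rcases le_total (f b) c with h' | h'
        · exact hoc.out (mem_image_of_mem _ hb) (mem_image_of_mem _ ha) ⟨h', h⟩
        · rcases mul_eq_zero.1 (le_antisymm hneg (mul_nonneg (by linarith) (by linarith))) with h0 | h0
          · exact ⟨a, ha, by linarith⟩
          · exact ⟨b, hb, by linarith⟩
    obtain ⟨d, hd, hdc⟩ := this
    have := hDH hd
    rw [hH] at this
    exact this hdc
  have hne : ∀ a ∈ Hᶜ, f a - c ≠ 0 := by
    intro a ha h0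
    rw [hH] at ha
    exact ha (show f a = c by linarith)
  have comp : ∀ a ∈ Hᶜ, ∀ b ∈ Hᶜ, 0 < (f a - c) * (f b - c) →
      connectedComponentIn Hᶜ a = connectedComponentIn Hᶜ b := by
    intro a ha b hb hab
    apply connectedComponentIn_eq
    refine (convex_segment a b).isPreconnected.subset_connectedComponentIn
      (left_mem_segment ℝ a b) ?_ (right_mem_segment ℝ a b)
    rintro z ⟨p, q, hp, hq, hpq, rfl⟩ hz
    rw [hH] at hz
    have hz' : p * f a + q * f b = c := by simpa using hz
    have h0 : p * (f a - c) + q * (f b - c) = 0 := by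
      have : c = (p + q) * c := by rw [hpq, one_mul]
      linarith
    have hA := hne a ha
    have h2 : p * (f a - c)^2 + q * ((f a - c) * (f b - c)) = 0 := by
      linear_combination (f a - c) * h0
    have h3 : 0 < (f a - c)^2 := by positivity
    rcases hp.eq_or_lt with rfl | hp
    · have : q = 1 := by linarith
      subst this
      linarith
    · have := mul_pos hp h3
      have := mul_nonneg hq hab.le
      linarith
  constructor
  · intro hs
    by_contra hneg
    push Not at hneg
    have : 0 < (f x - c) * (f y - c) :=
      lt_of_le_of_ne hneg (mul_ne_zero (hne x (h1 hx)) (hne y (h2 hy))).symm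
    exact hs ⟨x, hx, y, hy, comp x (h1 hx) y (h2 hy) this⟩
  · rintro hlt ⟨x', hx', y', hy', he⟩
    have hm : y' ∈ connectedComponentIn Hᶜ x' := by
      rw [he]; exact mem_connectedComponentIn (h2 hy')
    have e1 := key C hC h1 x hx x' hx'
    have e2 := key C' hC' h2 y hy y' hy'
    have e3 := key _ isPreconnected_connectedComponentIn (connectedComponentIn_subset Hᶜ x')
      x' (mem_connectedComponentIn (h1 hx')) y' hm
    have := mul_pos (mul_pos e1 e2) e3
    have h4 : (f x - c) * (f x' - c) * ((f y - c) * (f y' - c)) * ((f x' - c) * (f y' - c))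
      = ((f x - c) * (f y - c)) * ((f x' - c) * (f y' - c))^2 := by ring
    rw [h4] at this
    nlinarith [sq_nonneg ((f x' - c) * (f y' - c))]

theorem aux_chamber {n : ℕ} {A : Set (Set (Fin n → ℝ))} {C : Set (Fin n → ℝ)}
    (hC : IsChamber A C) : IsPreconnected C ∧ C.Nonempty ∧ C ⊆ (⋃₀ A)ᶜ ∧
      ∀ H ∈ A, C ⊆ Hᶜ := by
  obtain ⟨x, hx, rfl⟩ := hC
  refine ⟨isPreconnected_connectedComponentIn, ⟨x, mem_connectedComponentIn hx⟩,
    connectedComponentIn_subset _ _, ?_⟩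
  intro H hH z hz hzH
  exact connectedComponentIn_subset _ _ hz ⟨H, hH, hzH⟩

theorem aux_sep {n : ℕ} {A : Set (Set (Fin n → ℝ))} {H C C' : Set (Fin n → ℝ)}
    {f : (Fin n → ℝ) →ₗ[ℝ] ℝ} {c : ℝ}
    (hH : H = {x | f x = c}) (hHA : H ∈ A) (hC : IsChamber A C) (hC' : IsChamber A C')
    {x y : Fin n → ℝ} (hx : x ∈ C) (hy : y ∈ C') :
    Separates H C C' ↔ (f x - c) * (f y - c) < 0 :=
  aux_sep_iff hH (aux_chamber hC).1 (aux_chamber hC').1 ((aux_chamber hC).2.2.2 H hHA)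
    ((aux_chamber hC').2.2.2 H hHA) hx hy

theorem aux_symm {n : ℕ} {H C C' : Set (Fin n → ℝ)} : Separates H C C' ↔ Separates H C' C := by
  unfold Separates
  constructor
  · rintro h ⟨x, hx, y, hy, e⟩
    exact h ⟨y, hy, x, hx, e.symm⟩
  · rintro h ⟨x, hx, y, hy, e⟩
    exact h ⟨y, hy, x, hx, e.symm⟩

theorem aux_trans {n : ℕ} {A : Set (Set (Fin n → ℝ))} (hA : IsLocallyFiniteArrangement A)
    {H C D E : Set (Fin n → ℝ)} (hHA : H ∈ A)
    (hC : IsChamber A C) (hD : IsChamber A D) (hE : IsChamber A E) :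
    Separates H C E ↔ ¬ (Separates H C D ↔ Separates H D E) := by
  obtain ⟨f, c, -, hH⟩ := hA.1 H hHA
  obtain ⟨x, hx⟩ := (aux_chamber hC).2.1
  obtain ⟨y, hy⟩ := (aux_chamber hD).2.1
  obtain ⟨z, hz⟩ := (aux_chamber hE).2.1
  rw [aux_sep hH hHA hC hE hx hz, aux_sep hH hHA hC hD hx hy, aux_sep hH hHA hD hE hy hz]
  have hne : ∀ a ∈ Hᶜ, f a - c ≠ 0 := by
    intro a ha h0
    rw [hH] at ha
    exact ha (show f a = c by linarith)
  have h1 := hne x ((aux_chamber hC).2.2.2 H hHA hx)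
  have h2 := hne y ((aux_chamber hD).2.2.2 H hHA hy)
  have h3 := hne z ((aux_chamber hE).2.2.2 H hHA hz)
  simp only [mul_neg_iff]
  rcases lt_or_gt_of_ne h1 with h1 | h1 <;> rcases lt_or_gt_of_ne h2 with h2 | h2 <;>
    rcases lt_or_gt_of_ne h3 with h3 | h3 <;> simp only [h1, h2, h3, not_lt.2 h1.le, not_lt.2 h2.le, not_lt.2 h3.le] <;> simp

theorem aux_lf {n : ℕ} {A : Set (Set (Fin n → ℝ))} (hA : IsLocallyFiniteArrangement A) :
    LocallyFinite (fun H : A => (H : Set (Fin n → ℝ))) := by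
  intro x
  obtain ⟨U, hU, hf⟩ := hA.2 x
  refine ⟨U, hU, ?_⟩
  refine Set.Finite.of_finite_image (f := Subtype.val) (hf.subset ?_) Subtype.val_injective.injOn
  rintro _ ⟨H, hH, rfl⟩
  exact ⟨H.2, hH⟩

theorem aux_open {n : ℕ} {A : Set (Set (Fin n → ℝ))} (hA : IsLocallyFiniteArrangement A)
    {C : Set (Fin n → ℝ)} (hC : IsChamber A C) : IsOpen C := by
  obtain ⟨x, hx, rfl⟩ := hC
  apply IsOpen.connectedComponentIn
  rw [isOpen_compl_iff, sUnion_eq_iUnion]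
  apply (aux_lf hA).isClosed_iUnion
  rintro ⟨H, hH⟩
  obtain ⟨f, c, -, rfl⟩ := hA.1 H hH
  exact isClosed_eq f.continuous_of_finiteDimensional continuous_const

theorem aux_finite {n : ℕ} {A : Set (Set (Fin n → ℝ))} (hA : IsLocallyFiniteArrangement A)
    {C D : Set (Fin n → ℝ)} (hC : IsChamber A C) (hD : IsChamber A D) :
    {H | H ∈ A ∧ Separates H C D}.Finite := by
  obtain ⟨x, hx⟩ := (aux_chamber hC).2.1
  obtain ⟨y, hy⟩ := (aux_chamber hD).2.1
  have hK : IsCompact (segment ℝ x y) := by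
    rw [segment_eq_image_lineMap]
    exact isCompact_Icc.image AffineMap.lineMap_continuous
  refine (((aux_lf hA).finite_nonempty_inter_compact hK).image Subtype.val).subset ?_
  rintro H ⟨hH, hs⟩
  refine ⟨⟨H, hH⟩, ?_, rfl⟩
  by_contra hemp
  have hsub : segment ℝ x y ⊆ Hᶜ := fun z hz hzH => hemp ⟨z, hzH, hz⟩
  exact hs ⟨x, hx, y, hy, connectedComponentIn_eq
    ((convex_segment x y).isPreconnected.subset_connectedComponentIn
      (left_mem_segment ℝ x y) hsub (right_mem_segment ℝ x y))⟩

theorem aux_eq {n : ℕ} {A : Set (Set (Fin n → ℝ))} (hA : IsLocallyFiniteArrangement A)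
    {C D : Set (Fin n → ℝ)} (hC : IsChamber A C) (hD : IsChamber A D)
    (hs : ∀ H ∈ A, ¬ Separates H C D) : C = D := by
  obtain ⟨x, hx, rfl⟩ := id hC
  obtain ⟨y, hy, rfl⟩ := id hD
  apply connectedComponentIn_eq
  refine (convex_segment x y).isPreconnected.subset_connectedComponentIn
      (left_mem_segment ℝ x y) ?_ (right_mem_segment ℝ x y)
  rintro z ⟨p, q, hp, hq, hpq, rfl⟩ ⟨H, hH, hz⟩
  obtain ⟨f, c, -, hf⟩ := hA.1 H hH
  have h1 := hs H hH
  rw [aux_sep hf hH hC hD (mem_connectedComponentIn hx) (mem_connectedComponentIn hy)] at h1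
  push Not at h1
  have hxn : f x - c ≠ 0 := fun h0 => hx ⟨H, hH, by rw [hf]; show f x = c; linarith⟩
  have hyn : f y - c ≠ 0 := fun h0 => hy ⟨H, hH, by rw [hf]; show f y = c; linarith⟩
  rw [hf] at hz
  have hz' : p * f x + q * f y = c := by simpa using hz
  have h0 : p * (f x - c) + q * (f y - c) = 0 := by
    have : c = (p + q) * c := by rw [hpq, one_mul]
    linarith
  have h2 : p * (f x - c)^2 + q * ((f x - c) * (f y - c)) = 0 := by
    linear_combination (f x - c) * h0
  have h3 : 0 < (f x - c)^2 := by positivity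
  rcases hp.eq_or_lt with rfl | hp
  · have : q = 1 := by linarith
    subst this
    apply hyn; linarith
  · have := mul_pos hp h3
    have := mul_nonneg hq h1
    linarith

theorem aux_dense {n : ℕ} (L : (Fin n → ℝ) →ₗ[ℝ] ℝ) (k : ℝ) (x0 : Fin n → ℝ) (h0 : L x0 ≠ k) :
    Dense {x | L x ≠ k} := by
  intro x
  by_cases hx : L x = k
  · have ht : Filter.Tendsto (fun e : ℝ => x + e • (x0 - x)) (nhdsWithin 0 {0}ᶜ) (nhds x) := by
      have hc : Continuous (fun e : ℝ => x + e • (x0 - x)) := by fun_prop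
      have := hc.tendsto 0
      simp only [zero_smul, add_zero] at this
      exact this.mono_left nhdsWithin_le_nhds
    refine mem_closure_of_tendsto ht ?_
    filter_upwards [self_mem_nhdsWithin] with e he
    simp only [mem_ofPred_eq, map_add, map_smul, map_sub, smul_eq_mul, hx]
    intro h
    have : e * (L x0 - k) = 0 := by linarith
    rcases mul_eq_zero.1 this with h | h
    · exact he h
    · exact h0 (by linarith)
  · exact subset_closure hx

/-- The key geometric step: the last wall on a generic segment. -/
theorem aux_step {n : ℕ} {A : Set (Set (Fin n → ℝ))} (hA : IsLocallyFiniteArrangement A)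
    {X Y : Set (Fin n → ℝ)} (hX : IsChamber A X) (hY : IsChamber A Y)
    (hne : {H | H ∈ A ∧ Separates H X Y}.Nonempty) :
    ∃ Z H₀, IsChamber A Z ∧ H₀ ∈ A ∧ Separates H₀ X Y ∧
      ∀ H ∈ A, (Separates H Z Y ↔ H = H₀) := by
  have hfin := aux_finite hA hX hY
  set S := {H | H ∈ A ∧ Separates H X Y} with hS
  have hA1 := hA.1
  unfold IsAffineHyperplane at hA1
  choose! f c hf0 hf using hA1
  obtain ⟨y, hy⟩ := (aux_chamber hY).2.1
  have hnz : ∀ D, IsChamber A D → ∀ a ∈ D, ∀ H ∈ A, f H a - c H ≠ 0 := by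
    intro D hD a ha H hH h0
    apply (aux_chamber hD).2.2.2 H hH ha
    rw [hf H hH]
    show f H a = c H
    linarith
  have hgen : ∃ x ∈ X, ∀ p ∈ S ×ˢ S, p.1 ≠ p.2 →
      (f p.1 x - c p.1) * (f p.2 y - c p.2) ≠ (f p.2 x - c p.2) * (f p.1 y - c p.1) := by
    have hd : Dense (⋂ p ∈ S ×ˢ S, {x : Fin n → ℝ | p.1 ≠ p.2 →
      (f p.1 x - c p.1) * (f p.2 y - c p.2) ≠ (f p.2 x - c p.2) * (f p.1 y - c p.1)}) := by
      apply dense_biInter_of_isOpen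
      · rintro ⟨H, G⟩ hp
        by_cases he : H = G
        · simp [he]
        · simp only [ne_eq, he, not_false_eq_true, forall_true_left]
          have c1 : Continuous (f H) := (f H).continuous_of_finiteDimensional
          have c2 : Continuous (f G) := (f G).continuous_of_finiteDimensional
          exact isOpen_ne_fun (by fun_prop) (by fun_prop)
      · exact (hfin.prod hfin).countable
      · rintro ⟨H, G⟩ ⟨hH, hG⟩
        by_cases he : H = G
        · simp [he]
        · simp only [ne_eq, he, not_false_eq_true, forall_true_left]
          have n1 := hnz Y hY y hy H hH.1
          have n2 := hnz Y hY y hy G hG.1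
          obtain ⟨x0, hx0⟩ : ∃ x0, ¬ (f H x0 - c H) * (f G y - c G)
              = (f G x0 - c G) * (f H y - c H) := by
            by_contra hall
            push Not at hall
            apply he
            rw [hf H hH.1, hf G hG.1]
            ext z
            have hz := hall z
            simp only [mem_ofPred_eq]
            constructor
            · intro h
              rw [h, sub_self, zero_mul] at hz
              rcases mul_eq_zero.1 hz.symm with h | h
              · linarith
              · exact absurd h n1
            · intro h
              rw [h, sub_self, zero_mul] at hz
              rcases mul_eq_zero.1 hz with h | h
              · linarith
              · exact absurd h n2
          have hde := aux_dense ((f G y - c G) • f H - (f H y - c H) • f G)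
            ((f G y - c G) * c H - (f H y - c H) * c G) x0 (by
              intro h
              simp only [LinearMap.sub_apply, LinearMap.smul_apply, smul_eq_mul] at h
              apply hx0; linarith)
          refine hde.mono ?_
          intro x hx h
          apply hx
          simp only [LinearMap.sub_apply, LinearMap.smul_apply, smul_eq_mul]
          linarith
    obtain ⟨x, hx, hx'⟩ := hd.inter_open_nonempty X (aux_open hA hX) (aux_chamber hX).2.1
    refine ⟨x, hx, fun p hp => ?_⟩
    have := mem_iInter₂.1 hx' p hp
    exact this
  obtain ⟨x, hx, hgx⟩ := hgen
  let τ : Set (Fin n → ℝ) → ℝ := fun H => (f H y - c H) / ((f H y - c H) - (f H x - c H))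
  have hSneg : ∀ H ∈ S, (f H x - c H) * (f H y - c H) < 0 := fun H hH =>
    (aux_sep (hf H hH.1) hH.1 hX hY hx hy).1 hH.2
  have hden : ∀ H ∈ S, 0 < (f H y - c H) * ((f H y - c H) - (f H x - c H)) := by
    intro H hH
    nlinarith [hSneg H hH, sq_nonneg (f H y - c H)]
  have hden' : ∀ H ∈ S, (f H y - c H) - (f H x - c H) ≠ 0 := by
    intro H hH h0
    have := hden H hH
    rw [h0, mul_zero] at this
    exact lt_irrefl _ this
  have hτinj : ∀ H ∈ S, ∀ G ∈ S, τ H = τ G → H = G := by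
    intro H hH G hG he
    by_contra hHG
    apply hgx (H, G) ⟨hH, hG⟩ hHG
    simp only [τ] at he
    rw [div_eq_div_iff (hden' H hH) (hden' G hG)] at he
    show (f H x - c H) * (f G y - c G) = (f G x - c G) * (f H y - c H)
    linarith
  have hτmul : ∀ H ∈ S, τ H * ((f H y - c H) - (f H x - c H)) = f H y - c H := fun H hH =>
    div_mul_cancel₀ _ (hden' H hH)
  have hτpos : ∀ H ∈ S, 0 < τ H := by
    intro H hH
    have h1 := hτmul H hH
    have h2 := hden H hH
    have : 0 < τ H * ((f H y - c H) - (f H x - c H))^2 := by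
      calc 0 < _ := h2
        _ = _ := by rw [pow_two, ← mul_assoc, h1]
    exact pos_of_mul_pos_left this (sq_nonneg _)
  have hτlt : ∀ H ∈ S, τ H < 1 := by
    intro H hH
    have h1 := hτmul H hH
    have h2 := hden' H hH
    have h3 := hSneg H hH
    have h5 : (1 - τ H) * ((f H y - c H) - (f H x - c H)) = -(f H x - c H) := by linarith
    have h4 : 0 < (1 - τ H) * ((f H y - c H) - (f H x - c H))^2 := by
      have : (1 - τ H) * ((f H y - c H) - (f H x - c H))^2
        = -(f H x - c H) * ((f H y - c H) - (f H x - c H)) := by rw [pow_two, ← mul_assoc, h5]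
      rw [this]
      nlinarith [sq_nonneg (f H x - c H)]
    linarith [pos_of_mul_pos_left h4 (sq_nonneg _)]
  obtain ⟨H₀, hH₀, hmin⟩ := hfin.exists_minimalFor τ S hne
  have hmin' : ∀ H ∈ S, H ≠ H₀ → τ H₀ < τ H := by
    intro H hH hne'
    rcases lt_trichotomy (τ H₀) (τ H) with h | h | h
    · exact h
    · exact absurd (hτinj _ hH₀ _ hH h).symm hne'
    · exact absurd (hmin hH h.le) (not_le.2 h)
  obtain ⟨s, hs0, hs1, hs⟩ : ∃ s, τ H₀ < s ∧ s < 1 ∧ ∀ H ∈ S, H ≠ H₀ → s < τ H := by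
    have e1 : ∀ᶠ s in nhdsWithin (τ H₀) (Ioi (τ H₀)), ∀ H ∈ S, H ≠ H₀ → s < τ H := by
      rw [Filter.eventually_all_finite hfin]
      intro H hH
      by_cases he : H = H₀
      · simp [he]
      · have := hmin' H hH he
        filter_upwards [nhdsWithin_le_nhds (Iio_mem_nhds this)] with s hs _
        exact hs
    have e2 : ∀ᶠ s in nhdsWithin (τ H₀) (Ioi (τ H₀)), s < 1 :=
      nhdsWithin_le_nhds (Iio_mem_nhds (hτlt H₀ hH₀))
    obtain ⟨s, h1, h2, h3⟩ := (e1.and (e2.and self_mem_nhdsWithin)).exists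
    exact ⟨s, h3, h2, h1⟩
  have hspos : 0 < s := (hτpos H₀ hH₀).trans hs0
  set z := (1 - s) • y + s • x with hz
  have hfz : ∀ H, f H z - c H = (1 - s) * (f H y - c H) + s * (f H x - c H) := by
    intro H
    simp only [hz, map_add, map_smul, smul_eq_mul]
    ring
  have hzS : ∀ H ∈ S, (f H z - c H) * (f H y - c H)
      = (f H y - c H) * ((f H y - c H) - (f H x - c H)) * (τ H - s) := by
    intro H hH
    rw [hfz]
    linear_combination (-(f H y - c H)) * hτmul H hH
  have hzpos : ∀ H ∈ A, H ≠ H₀ → 0 < (f H z - c H) * (f H y - c H) := by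
    intro H hH hne'
    by_cases hHS : H ∈ S
    · rw [hzS H hHS]
      exact mul_pos (hden H hHS) (by linarith [hs H hHS hne'])
    · have h1 : ¬ (f H x - c H) * (f H y - c H) < 0 := fun h =>
        hHS ⟨hH, (aux_sep (hf H hH) hH hX hY hx hy).2 h⟩
      push Not at h1
      have h2 := hnz Y hY y hy H hH
      rw [hfz]
      have h3 : 0 < (1 - s) * (f H y - c H)^2 := by
        have : 0 < 1 - s := by linarith
        positivity
      have h4 := mul_nonneg hspos.le h1
      linarith
  have hzneg : (f H₀ z - c H₀) * (f H₀ y - c H₀) < 0 := by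
    rw [hzS H₀ hH₀]
    exact mul_neg_of_pos_of_neg (hden H₀ hH₀) (by linarith)
  have hzmem : z ∈ (⋃₀ A)ᶜ := by
    rintro ⟨H, hH, hzH⟩
    rw [hf H hH] at hzH
    have h0 : f H z - c H = 0 := sub_eq_zero.2 hzH
    by_cases he : H = H₀
    · subst he
      rw [h0, zero_mul] at hzneg
      exact lt_irrefl _ hzneg
    · have := hzpos H hH he
      rw [h0, zero_mul] at this
      exact lt_irrefl _ this
  have hZ : IsChamber A (connectedComponentIn (⋃₀ A)ᶜ z) := ⟨z, hzmem, rfl⟩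
  refine ⟨_, H₀, hZ, hH₀.1, hH₀.2, ?_⟩
  intro H hH
  rw [aux_sep (hf H hH) hH hZ hY (mem_connectedComponentIn hzmem) hy]
  constructor
  · intro h
    by_contra he
    exact absurd (hzpos H hH he) (not_lt.2 h.le)
  · rintro rfl
    exact hzneg

theorem aux_append {n : ℕ} {A : Set (Set (Fin n → ℝ))} {s : ℕ} {E : ℕ → Set (Fin n → ℝ)}
    (hE : IsReducedPath A s E) {Y : Set (Fin n → ℝ)} (hadj : Adjacent A (E s) Y)
    (hno : ∀ G ∈ A, Separates G (E s) Y → ∀ j < s, ¬ Separates G (E j) (E (j + 1))) :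
    IsReducedPath A (s + 1) (fun j => if j ≤ s then E j else Y) := by
  refine ⟨⟨?_, ?_⟩, ?_⟩
  · intro j hj
    by_cases h : j ≤ s
    · simpa [h] using hE.1.1 j h
    · simpa [h] using hadj.2.1
  · intro j hj
    rcases Nat.lt_succ_iff_lt_or_eq.1 hj with h | rfl
    · simpa [h.le, Nat.succ_le_of_lt h] using hE.1.2 j h
    · simpa using hadj
  · intro j k hj hk hjk G hG
    rcases Nat.lt_succ_iff_lt_or_eq.1 hj with h | rfl
    · rcases Nat.lt_succ_iff_lt_or_eq.1 hk with h' | rfl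
      · simpa [h.le, Nat.succ_le_of_lt h, h'.le, Nat.succ_le_of_lt h'] using
          hE.2 j k h h' hjk G hG
      · have := hno G hG
        simp only [h.le, Nat.succ_le_of_lt h, if_true, le_refl]
        intro a b
        refine this (by simpa using b) j h a
    · have h' : k < j := by omega
      have := hno G hG
      simp only [h'.le, Nat.succ_le_of_lt h', if_true, le_refl]
      intro a b
      refine this (by simpa using a) k h' b

theorem aux_path {n : ℕ} {A : Set (Set (Fin n → ℝ))} (hA : IsLocallyFiniteArrangement A)
    {X : Set (Fin n → ℝ)} (hX : IsChamber A X) (m : ℕ) :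
    ∀ Y, IsChamber A Y → {H | H ∈ A ∧ Separates H X Y}.ncard = m →
    ∃ (s : ℕ) (E : ℕ → Set (Fin n → ℝ)), E 0 = X ∧ E s = Y ∧ IsReducedPath A s E ∧
      ∀ j < s, ∀ G ∈ A, Separates G (E j) (E (j + 1)) → Separates G X Y := by
  induction m with
  | zero =>
    intro Y hY hc
    rw [ncard_eq_zero (aux_finite hA hX hY)] at hc
    have : X = Y := aux_eq hA hX hY fun H hH hs => by
      have : H ∈ {H | H ∈ A ∧ Separates H X Y} := ⟨hH, hs⟩
      rw [hc] at this
      exact this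
    subst this
    exact ⟨0, fun _ => X, rfl, rfl, ⟨⟨fun _ _ => hX, by simp⟩, by simp⟩, by simp⟩
  | succ m ih =>
    intro Y hY hc
    have hne : {H | H ∈ A ∧ Separates H X Y}.Nonempty := by
      apply nonempty_of_ncard_ne_zero; omega
    obtain ⟨Z, H₀, hZ, hH₀, hs₀, hiff⟩ := aux_step hA hX hY hne
    have hXZ : ∀ H ∈ A, (Separates H X Z ↔ Separates H X Y ∧ H ≠ H₀) := by
      intro H hH
      have h1 := aux_trans hA hH hX hZ hY
      have h2 := hiff H hH
      by_cases he : H = H₀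
      · have h3 : Separates H X Y := he ▸ hs₀
        simp only [he, iff_true, not_true, ne_eq, and_false, iff_false] at h1 h2 h3 ⊢
        simp only [h3, h2, true_iff, iff_true] at h1
        exact h1
      · have h3 : ¬ Separates H Z Y := fun h => he (h2.1 h)
        simp only [h3, iff_false, not_not] at h1
        simp [h1, he]
    have hset : {H | H ∈ A ∧ Separates H X Z} = {H | H ∈ A ∧ Separates H X Y} \ {H₀} := by
      ext H
      simp only [mem_ofPred_eq, mem_sdiff, mem_singleton_iff]
      have := hXZ H
      tauto
    have hcard : {H | H ∈ A ∧ Separates H X Z}.ncard = m := by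
      have hm : H₀ ∈ {H | H ∈ A ∧ Separates H X Y} := ⟨hH₀, hs₀⟩
      rw [hset, ncard_sdiff_singleton_of_mem hm, hc]
      rfl
    obtain ⟨s, E, hE0, hEs, hE, hEG⟩ := ih Z hZ hcard
    have hadj : Adjacent A (E s) Y := by
      rw [hEs]
      exact ⟨hZ, hY, H₀, ⟨hH₀, (hiff H₀ hH₀).2 rfl⟩, fun G hG => (hiff G hG.1).1 hG.2⟩
    refine ⟨s + 1, fun j => if j ≤ s then E j else Y, by simpa using hE0, by simp,
      aux_append hE hadj ?_, ?_⟩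
    · intro G hG hGs j hj hj'
      rw [hEs, hiff G hG] at hGs
      exact ((hXZ G hG).1 (hEG j hj G hG hj')).2 hGs
    · intro j hj G hG
      rcases Nat.lt_succ_iff_lt_or_eq.1 hj with h | rfl
      · simp only [h.le, Nat.succ_le_of_lt h, if_true]
        intro h'
        exact ((hXZ G hG).1 (hEG j h G hG h')).1
      · simp only [le_refl, if_true]
        intro h'
        have h'' : Separates G (E j) Y := by simpa using h'
        rw [hEs, hiff G hG] at h''
        rw [h'']; exact hs₀

/-- If nothing crosses `G` between steps `a` and `b`, then `G` does not separate the ends. -/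
theorem aux_nocross {n : ℕ} {A : Set (Set (Fin n → ℝ))} (hA : IsLocallyFiniteArrangement A)
    {C : ℕ → Set (Fin n → ℝ)} {G : Set (Fin n → ℝ)} (hG : G ∈ A) (a d : ℕ)
    (hch : ∀ j, a ≤ j → j ≤ a + d → IsChamber A (C j))
    (hno : ∀ j, a ≤ j → j < a + d → ¬ Separates G (C j) (C (j + 1))) :
    ¬ Separates G (C a) (C (a + d)) := by
  induction d with
  | zero =>
    intro h
    obtain ⟨x, hx⟩ := (aux_chamber (hch a le_rfl (by omega))).2.1
    exact h ⟨x, hx, x, hx, rfl⟩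
  | succ d ih =>
    have h1 := ih (fun j h h' => hch j h (by omega)) (fun j h h' => hno j h (by omega))
    have h2 := hno (a + d) (by omega) (by omega)
    have h3 := aux_trans hA hG (hch a le_rfl (by omega)) (hch (a + d) (by omega) (by omega))
      (hch (a + d + 1) (by omega) (by omega))
    rw [← add_assoc]
    tauto

/-- Let `𝓐` be a locally finite hyperplane arrangement in `ℝ^n`, let
`α : A₀ = C 0 → C 1 → ⋯ → C t = B` be a reduced positive path between chambers, and let `Cc`
be a chamber adjacent to `B = C t`.  If the positive path from `A₀` to `Cc` obtained by
appending to `α` the step `B → Cc` is not reduced, then there exists a reduced positive path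
`γ` from `A₀` to `Cc` such that the positive path from `A₀` to `B` obtained by appending to
`γ` the step `Cc → B` is reduced. -/
theorem exists_reduced_path_after_nonreduced_extension
    {n : ℕ} (A : Set (Set (Fin n → ℝ))) (hA : IsLocallyFiniteArrangement A)
    (t : ℕ) (C : ℕ → Set (Fin n → ℝ)) (hα : IsReducedPath A t C)
    (Cc : Set (Fin n → ℝ)) (hadj : Adjacent A (C t) Cc)
    (hnotred : ¬ IsReducedPath A (t + 1) (fun j => if j ≤ t then C j else Cc)) :
    ∃ (s : ℕ) (E : ℕ → Set (Fin n → ℝ)),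
      E 0 = C 0 ∧ E s = Cc ∧ E (s + 1) = C t ∧
      IsReducedPath A s E ∧ IsReducedPath A (s + 1) E := by
  obtain ⟨hB, hCc, H, ⟨hH, hHs⟩, hHu⟩ := id hadj
  have hC0 : IsChamber A (C 0) := hα.1.1 0 (Nat.zero_le _)
  have hHn : ¬ Separates H (C 0) Cc := by
    intro hsep
    apply hnotred
    apply aux_append hα hadj
    intro G hG hGs j hj hj'
    obtain rfl : G = H := hHu G ⟨hG, hGs⟩
    have h1 : ¬ Separates G (C 0) (C (0 + j)) := by
      apply aux_nocross hA hG
      · intro i _ hi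
        exact hα.1.1 i (by omega)
      · intro i _ hi
        exact hα.2 j i hj (by omega) (by omega) G hG hj'
    have h2 : ¬ Separates G (C (j + 1)) (C (j + 1 + (t - (j + 1)))) := by
      apply aux_nocross hA hG
      · intro i _ hi
        exact hα.1.1 i (by omega)
      · intro i _ hi
        exact hα.2 j i hj (by omega) (by omega) G hG hj'
    rw [zero_add] at h1
    rw [show j + 1 + (t - (j + 1)) = t by omega] at h2
    have hj1 := hα.1.1 j hj.le
    have hj2 := hα.1.1 (j + 1) hj
    have e1 := aux_trans hA hG hC0 hj1 hj2
    have e2 := aux_trans hA hG hC0 hj2 hB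
    have e3 := aux_trans hA hG hC0 hB hCc
    tauto
  obtain ⟨s, E, hE0, hEs, hE, hEG⟩ := aux_path hA hC0 _ Cc hCc rfl
  have hadj' : Adjacent A (E s) (C t) := by
    rw [hEs]
    exact ⟨hCc, hB, H, ⟨hH, aux_symm.1 hHs⟩, fun G hG => hHu G ⟨hG.1, aux_symm.1 hG.2⟩⟩
  have hred := aux_append hE hadj' (by
    intro G hG hGs j hj hj'
    rw [hEs] at hGs
    obtain rfl : G = H := hHu G ⟨hG, aux_symm.1 hGs⟩
    exact hHn (hEG j hj G hG hj'))
  refine ⟨s, fun j => if j ≤ s then E j else C t, by simpa using hE0, by simpa using hEs,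
    by simp, ?_, hred⟩
  exact ⟨⟨fun j hj => hred.1.1 j (by omega), fun j hj => hred.1.2 j (by omega)⟩,
    fun j k hj hk => hred.2 j k (by omega) (by omega)⟩
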